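/- Fix natural numbers g, n with 2g + n > 0. The contraction map is a well-defined bijection from the set of stable rooted trees T in SRT_{g,n,2} whose root vertex v_r has genus g(v_r) = 0 and exactly one positive half-edge, this positive half-edge being an edge (not a regular leg), onto the set of stable rooted trees T' in SRT_{g,n,2} whose root vertex satisfies 2 g(v_r) − 2 + |H_+(v_r)| ≥ 0. -/

import Mathlib

/-- A raw combinatorial rooted tree with genus labels and `n` labeled regular legs.
Vertices are `0, 1, …, numV − 1` with root `0`; `parent v < v` (for valid trees)
encodes the rooted tree structure; `genus v` is the genus label of vertex `v`;
`legAt i` is the vertex carrying the regular leg `i`.  The `m` frozen legs are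
always attached to the root and enter only through the stability condition. -/
structure RawTree (n : ℕ) where
  numV : ℕ
  parent : ℕ → ℕ
  genus : ℕ → ℕ
  legAt : Fin n → ℕ

namespace RawTree

variable {n : ℕ}

/-- The set of children of the vertex `v` (edge-ends at `v` directed away from
the root correspond to the children of `v`). -/
def children (T : RawTree n) (v : ℕ) : Finset ℕ :=
  (Finset.range T.numV).filter (fun w => T.parent w = v ∧ w ≠ v)

/-- The set of regular legs attached to the vertex `v`. -/
def legsAt (T : RawTree n) (v : ℕ) : Finset (Fin n) :=
  Finset.univ.filter (fun i => T.legAt i = v)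

/-- `T` is a stable rooted tree of type `(g, n, m)`: it is a genuine rooted tree
with root `0`, all legs attached to actual vertices, total genus `g`, and every
vertex `v` satisfies the stability condition `2 g(v) − 2 + |H(v)| > 0`, where
`|H(v)| = |children| + |regular legs at v| + (m if v is the root, else 1)`. -/
def IsSRT (g n m : ℕ) (T : RawTree n) : Prop :=
  0 < T.numV ∧
  T.parent 0 = 0 ∧
  (∀ v, 0 < v → v < T.numV → T.parent v < v) ∧
  (∀ i, T.legAt i < T.numV) ∧
  (∑ v ∈ Finset.range T.numV, T.genus v) = g ∧
  (∀ v, v < T.numV →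
    2 < 2 * T.genus v +
      ((T.children v).card + (T.legsAt v).card + (if v = 0 then m else 1)))

/-- Isomorphism of raw trees: a bijection of the vertex sets preserving the root,
the tree structure, the genus labels and the leg labels. -/
def Iso (T T' : RawTree n) : Prop :=
  ∃ σ : ℕ → ℕ,
    Set.BijOn σ (Set.Iio T.numV) (Set.Iio T'.numV) ∧
    σ 0 = 0 ∧
    (∀ v < T.numV, σ (T.parent v) = T'.parent (σ v)) ∧
    (∀ v < T.numV, T'.genus (σ v) = T.genus v) ∧
    (∀ i, σ (T.legAt i) = T'.legAt i)

/-- The root of `T` has genus `0` and its unique positive half-edge is an edge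
(exactly one child and no regular legs at the root). -/
def RootContractible (T : RawTree n) : Prop :=
  T.genus 0 = 0 ∧ (T.children 0).card = 1 ∧ (T.legsAt 0).card = 0

/-- The root of `T` satisfies `2 g(v_r) − 2 + |H_+(v_r)| ≥ 0`. -/
def RootStablePlus (T : RawTree n) : Prop :=
  2 ≤ 2 * T.genus 0 + ((T.children 0).card + (T.legsAt 0).card)

/-- Contraction of a tree whose root has genus `0` and a unique positive
half-edge which is an edge: delete the root and this edge, declare the unique
child (which is the vertex `1`) to be the new root, and reattach the frozen legs
to it. -/
def contract (T : RawTree n) : RawTree n where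
  numV := T.numV - 1
  parent := fun v => T.parent (v + 1) - 1
  genus := fun v => T.genus (v + 1)
  legAt := fun i => T.legAt i - 1

end RawTree

/-- Representatives of stable rooted trees of type `(g, n, m)`. -/
def SRTRep (g n m : ℕ) : Type :=
  {T : RawTree n // RawTree.IsSRT g n m T}

/-- The isomorphism relation on representatives. -/
def SRTRel (g n m : ℕ) (S S' : SRTRep g n m) : Prop :=
  RawTree.Iso S.1 S'.1

/-- `SRT g n m`: the set of isomorphism classes of stable rooted trees of type
`(g, n, m)`. -/
def SRT (g n m : ℕ) : Type :=
  Quot (SRTRel g n m)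

/-!
Contraction is inverse to `RawTree.expand`, which attaches a new root of genus `0` below the old
one. For `2 ≤ m` the new root, having `m + 1` half-edges, is stable. The old root exchanges its `m`
frozen half-edges for a single half-edge towards the new root, so its stability in the expanded tree
reads `2 g(v_r) − 2 + |H_+(v_r)| + 1 > 0`, which is the condition on the target of the contraction
map. An isomorphism of expanded trees fixes the new root and hence its unique child, the old root,
so it restricts to an isomorphism of the original trees.
-/

theorem bijOn_Iio_succ_iff {σ τ : ℕ → ℕ} {a b : ℕ} (hτ0 : τ 0 = 0)
    (hτ : ∀ v < a, τ (v + 1) = σ v + 1) :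
    Set.BijOn τ (Set.Iio (a + 1)) (Set.Iio (b + 1)) ↔ Set.BijOn σ (Set.Iio a) (Set.Iio b) := by
  have hmaps : Set.MapsTo τ (Set.Iio (a + 1)) (Set.Iio (b + 1)) ↔
      Set.MapsTo σ (Set.Iio a) (Set.Iio b) := by
    change (∀ v < a + 1, τ v < b + 1) ↔ ∀ v < a, σ v < b
    simp +contextual [-Order.lt_add_one_iff, Nat.forall_lt_succ_left, hτ0, hτ]
  have hinj : Set.InjOn τ (Set.Iio (a + 1)) ↔ Set.InjOn σ (Set.Iio a) := by
    change (∀ v < a + 1, ∀ w < a + 1, τ v = τ w → v = w) ↔ ∀ v < a, ∀ w < a, σ v = σ w → v = w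
    simp +contextual [-Order.lt_add_one_iff, Nat.forall_lt_succ_left, hτ0, hτ]
  have hsurj : Set.SurjOn τ (Set.Iio (a + 1)) (Set.Iio (b + 1)) ↔
      Set.SurjOn σ (Set.Iio a) (Set.Iio b) := by
    change (∀ w < b + 1, ∃ v < a + 1, τ v = w) ↔ ∀ w < b, ∃ v < a, σ v = w
    have hshift (w : ℕ) : (∃ v < a, τ (v + 1) = w + 1) ↔ ∃ v < a, σ v = w :=
      exists_congr fun v => and_congr_right fun hv => by rw [hτ v hv, Nat.add_right_cancel_iff]
    simp [-Order.lt_add_one_iff, Nat.forall_lt_succ_left, Nat.exists_lt_succ_left, hτ0, hshift]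
  rw [Set.BijOn, Set.BijOn, hmaps, hinj, hsurj]

theorem exists_bijective_quot_subtype {α β : Type*} {r : α → α → Prop} {s : β → β → Prop}
    (hr : Equivalence r) (hs : Equivalence s) {P : α → Prop} {Q : β → Prop}
    (f : {a // P a} → {b // Q b}) (hf : ∀ a a', s (f a) (f a') ↔ r a a')
    (hsurj : ∀ b : {b // Q b}, ∃ a, s (f a) b) :
    ∃ F : {t : Quot r // ∃ a, Quot.mk r a = t ∧ P a} → {t : Quot s // ∃ b, Quot.mk s b = t ∧ Q b},
      Function.Bijective F ∧
      ∀ a : {a // P a}, (F ⟨Quot.mk r a, a, rfl, a.2⟩).val = Quot.mk s (f a) := by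
  have hrep (t : {t : Quot r // ∃ a, Quot.mk r a = t ∧ P a}) :
      ∃ a : {a // P a}, Quot.mk r a = t.val :=
    let ⟨a, hat, ha⟩ := t.2
    ⟨⟨a, ha⟩, hat⟩
  choose rep hrep using hrep
  have hF (a : {a // P a}) :
      Quot.mk s (f (rep ⟨Quot.mk r a, a, rfl, a.2⟩)) = Quot.mk s (f a) :=
    Quot.sound ((hf _ _).2 ((hr.quot_mk_eq_iff _ _).1 (hrep _)))
  refine ⟨fun t => ⟨Quot.mk s (f (rep t)), f (rep t), rfl, (f (rep t)).2⟩, ⟨?_, ?_⟩, hF⟩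
  · intro t t' h
    have hrel : r (rep t) (rep t') :=
      (hf _ _).1 ((hs.quot_mk_eq_iff _ _).1 (congrArg Subtype.val h))
    exact Subtype.ext ((hrep t).symm.trans ((Quot.sound hrel).trans (hrep t')))
  · rintro ⟨_, b, rfl, hb⟩
    obtain ⟨a, hab⟩ := hsurj ⟨b, hb⟩
    exact ⟨⟨Quot.mk r a, a, rfl, a.2⟩, Subtype.ext ((hF a).trans (Quot.sound hab))⟩

namespace RawTree

variable {n g m : ℕ} {T T' T'' : RawTree n}

theorem mem_children {v w : ℕ} :
    w ∈ T.children v ↔ w < T.numV ∧ T.parent w = v ∧ w ≠ v := by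
  simp [children]

theorem mem_legsAt {v : ℕ} {i : Fin n} : i ∈ T.legsAt v ↔ T.legAt i = v := by
  simp [legsAt]

namespace IsSRT

theorem numV_pos (hT : IsSRT g n m T) : 0 < T.numV := hT.1

theorem parent_zero (hT : IsSRT g n m T) : T.parent 0 = 0 := hT.2.1

theorem parent_lt_self (hT : IsSRT g n m T) {v : ℕ} (hv : 0 < v) (hvT : v < T.numV) :
    T.parent v < v :=
  hT.2.2.1 v hv hvT

theorem legAt_lt_numV (hT : IsSRT g n m T) (i : Fin n) : T.legAt i < T.numV :=
  hT.2.2.2.1 i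

theorem parent_lt_numV (hT : IsSRT g n m T) {v : ℕ} (hv : v < T.numV) :
    T.parent v < T.numV := by
  rcases v.eq_zero_or_pos with rfl | hv0
  · rwa [hT.parent_zero]
  · exact (hT.parent_lt_self hv0 hv).trans hv

end IsSRT

namespace Iso

theorem refl (T : RawTree n) : Iso T T :=
  ⟨id, Set.bijOn_id _, rfl, fun _ _ => rfl, fun _ _ => rfl, fun _ => rfl⟩

theorem trans (h : Iso T T') (h' : Iso T' T'') : Iso T T'' := by
  obtain ⟨σ, hσ, hroot, hparent, hgenus, hleg⟩ := h
  obtain ⟨τ, hτ, hroot', hparent', hgenus', hleg'⟩ := h'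
  refine ⟨τ ∘ σ, hτ.comp hσ, by simp [hroot, hroot'], fun v hv => ?_, fun v hv => ?_,
    fun i => by simp [hleg, hleg']⟩
  · simp [hparent v hv, hparent' _ (hσ.mapsTo hv)]
  · simp [hgenus v hv, hgenus' _ (hσ.mapsTo hv)]

theorem symm (hT : IsSRT g n m T) (h : Iso T T') : Iso T' T := by
  obtain ⟨σ, hσ, hroot, hparent, hgenus, hleg⟩ := h
  have hinv := hσ.invOn_invFunOn
  set τ := Function.invFunOn σ (Set.Iio T.numV)
  have hτσ : ∀ v < T.numV, τ (σ v) = v := fun v hv => hinv.1 hv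
  refine ⟨τ, hσ.symm hinv.symm, ?_, fun w hw => ?_, fun w hw => ?_, fun i => ?_⟩
  · simpa [hroot] using hτσ 0 hT.numV_pos
  · obtain ⟨v, hv, rfl⟩ := hσ.surjOn hw
    rw [← hparent v hv, hτσ v hv, hτσ _ (hT.parent_lt_numV hv)]
  · obtain ⟨v, hv, rfl⟩ := hσ.surjOn hw
    rw [hτσ v hv, hgenus v hv]
  · rw [← hleg i, hτσ _ (hT.legAt_lt_numV i)]

end Iso

/-- Equality of rooted trees with labelled vertices: the two encodings may differ only in the
irrelevant values of `parent` and `genus` at numbers that are not vertices. -/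
structure Agree (T T' : RawTree n) : Prop where
  numV_eq : T.numV = T'.numV
  parent_eq : ∀ v < T.numV, T.parent v = T'.parent v
  genus_eq : ∀ v < T.numV, T.genus v = T'.genus v
  legAt_eq : ∀ i, T.legAt i = T'.legAt i

namespace Agree

theorem symm (h : Agree T T') : Agree T' T where
  numV_eq := h.numV_eq.symm
  parent_eq v hv := (h.parent_eq v (h.numV_eq ▸ hv)).symm
  genus_eq v hv := (h.genus_eq v (h.numV_eq ▸ hv)).symm
  legAt_eq i := (h.legAt_eq i).symm

theorem iso (h : Agree T T') : Iso T T' :=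
  ⟨id, h.numV_eq ▸ Set.bijOn_id _, rfl, h.parent_eq, fun v hv => (h.genus_eq v hv).symm,
    h.legAt_eq⟩

theorem children_eq (h : Agree T T') (v : ℕ) : T.children v = T'.children v := by
  ext w
  simp only [mem_children, ← h.numV_eq]
  exact and_congr_right fun hw => by rw [h.parent_eq w hw]

theorem legsAt_eq (h : Agree T T') (v : ℕ) : T.legsAt v = T'.legsAt v := by
  simp only [legsAt, h.legAt_eq]

theorem isSRT (h : Agree T T') (hT : IsSRT g n m T) : IsSRT g n m T' := by
  obtain ⟨hpos, hroot, hparent, hleg, hsum, hstable⟩ := hT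
  refine ⟨h.numV_eq ▸ hpos, by rw [← h.parent_eq 0 hpos, hroot], fun v hv hvT => ?_,
    by simpa only [h.numV_eq, h.legAt_eq] using hleg, ?_, fun v hvT => ?_⟩
  · rw [← h.numV_eq] at hvT
    exact h.parent_eq v hvT ▸ hparent v hv hvT
  · rw [← hsum, ← h.numV_eq]
    exact Finset.sum_congr rfl fun v hv => (h.genus_eq v (Finset.mem_range.1 hv)).symm
  · rw [← h.numV_eq] at hvT
    rw [← h.genus_eq v hvT, ← h.children_eq, ← h.legsAt_eq]
    exact hstable v hvT

end Agree

/-- The inverse of contraction: a new root of genus `0` without regular legs is attached below the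
old root. The old vertex `v` becomes `v + 1`. -/
def expand (T : RawTree n) : RawTree n where
  numV := T.numV + 1
  parent
    | 0 => 0
    | 1 => 0
    | v + 2 => T.parent (v + 1) + 1
  genus
    | 0 => 0
    | v + 1 => T.genus v
  legAt i := T.legAt i + 1

theorem parent_expand_eq_zero_iff {v : ℕ} : T.expand.parent v = 0 ↔ v ≤ 1 := by
  rcases v with _ | _ | v <;> simp [expand]

theorem parent_expand_succ {v : ℕ} (hv : v ≠ 0) :
    T.expand.parent (v + 1) = T.parent v + 1 := by
  obtain ⟨v, rfl⟩ := Nat.exists_eq_succ_of_ne_zero hv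
  rfl

theorem children_expand_zero (hT : 0 < T.numV) : T.expand.children 0 = {1} := by
  ext w
  simp only [mem_children, parent_expand_eq_zero_iff, Finset.mem_singleton]
  simp only [expand]
  lia

theorem children_expand_succ (hroot : T.parent 0 = 0) (v : ℕ) :
    T.expand.children (v + 1) = (T.children v).map (addRightEmbedding 1) := by
  ext w
  rcases w with _ | _ | w
  · simp [mem_children, expand]
  · simp [mem_children, expand, hroot]
  · simp [mem_children, expand]

theorem legsAt_expand_zero : T.expand.legsAt 0 = ∅ := by
  ext i
  simp [mem_legsAt, expand]

theorem legsAt_expand_succ (v : ℕ) : T.expand.legsAt (v + 1) = T.legsAt v := by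
  ext i
  simp [mem_legsAt, expand]

theorem rootContractible_expand (hT : 0 < T.numV) : RootContractible T.expand :=
  ⟨rfl, by simp [children_expand_zero hT], by simp [legsAt_expand_zero]⟩

theorem parent_expand_lt_self_iff :
    (∀ v, 0 < v → v < T.expand.numV → T.expand.parent v < v) ↔
      ∀ v, 0 < v → v < T.numV → T.parent v < v := by
  constructor
  · intro h v hv hvT
    simpa [parent_expand_succ hv.ne'] using h (v + 1) v.succ_pos (Nat.succ_lt_succ hvT)
  · rintro h (_ | _ | v) hv hvT
    · exact absurd hv (lt_irrefl 0)
    · exact Nat.one_pos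
    · exact Nat.succ_lt_succ (h (v + 1) v.succ_pos (Nat.lt_of_succ_lt_succ hvT))

theorem stable_expand_iff (hT : 0 < T.numV) (hroot : T.parent 0 = 0) (hm : 2 ≤ m) :
    (∀ v < T.expand.numV, 2 < 2 * T.expand.genus v +
        ((T.expand.children v).card + (T.expand.legsAt v).card + if v = 0 then m else 1)) ↔
      (∀ v < T.numV, 2 < 2 * T.genus v +
        ((T.children v).card + (T.legsAt v).card + if v = 0 then m else 1)) ∧
      RootStablePlus T := by
  have hnumV : T.expand.numV = T.numV + 1 := rfl
  have hgenus0 : T.expand.genus 0 = 0 := rfl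
  have hgenus (v : ℕ) : T.expand.genus (v + 1) = T.genus v := rfl
  obtain ⟨N, hN⟩ := Nat.exists_eq_succ_of_ne_zero hT.ne'
  simp only [hnumV, hN, Nat.succ_eq_add_one, Nat.forall_lt_succ_left, children_expand_zero hT,
    legsAt_expand_zero, children_expand_succ hroot, legsAt_expand_succ, hgenus0, hgenus,
    Finset.card_map, Finset.card_singleton, Finset.card_empty, RootStablePlus, if_true,
    Nat.add_eq_zero_iff, one_ne_zero, and_false, if_false]
  grind

theorem isSRT_expand_iff (hT : 0 < T.numV) (hroot : T.parent 0 = 0) (hm : 2 ≤ m) :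
    IsSRT g n m T.expand ↔ IsSRT g n m T ∧ RootStablePlus T := by
  have hpos : 0 < T.expand.numV := T.numV.succ_pos
  have hroot' : T.expand.parent 0 = 0 := rfl
  have hleg : (∀ i, T.expand.legAt i < T.expand.numV) ↔ ∀ i, T.legAt i < T.numV := by
    simp [expand]
  have hsum : ∑ v ∈ Finset.range T.expand.numV, T.expand.genus v =
      ∑ v ∈ Finset.range T.numV, T.genus v := by
    simp [expand, Finset.sum_range_succ']
  simp only [IsSRT, hpos, hroot', hT, hroot, hleg, hsum, parent_expand_lt_self_iff,
    stable_expand_iff hT hroot hm, true_and, and_assoc]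

theorem Iso.expand (h : Iso T T') : Iso T.expand T'.expand := by
  obtain ⟨σ, hσ, hroot, hparent, hgenus, hleg⟩ := h
  let τ : ℕ → ℕ
    | 0 => 0
    | v + 1 => σ v + 1
  have hτ : Set.BijOn τ (Set.Iio (T.numV + 1)) (Set.Iio (T'.numV + 1)) :=
    (bijOn_Iio_succ_iff (σ := σ) (τ := τ) rfl fun _ _ => rfl).2 hσ
  refine ⟨τ, hτ, rfl, ?_, ?_, fun i => congrArg (· + 1) (hleg i)⟩
  · rintro (_ | _ | v) hv
    · rfl
    · simp [τ, hroot, RawTree.expand]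
    · have hv' : v + 1 < T.numV := Nat.lt_of_succ_lt_succ hv
      have hσv : σ (v + 1) ≠ 0 := fun h0 =>
        v.succ_ne_zero (hσ.injOn hv' (v.succ_pos.trans hv') (h0.trans hroot.symm))
      simp [τ, parent_expand_succ, hσv, hparent _ hv']
  · rintro (_ | v) hv
    · rfl
    · exact hgenus v (Nat.lt_of_succ_lt_succ hv)

theorem Iso.of_expand (hT : 0 < T.numV) (hroot : T.parent 0 = 0) (hroot' : T'.parent 0 = 0)
    (h : Iso T.expand T'.expand) : Iso T T' := by
  obtain ⟨σ, hσ, hσ0, hparent, hgenus, hleg⟩ := h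
  have hσ_ne : ∀ v < T.numV, σ (v + 1) ≠ 0 := fun v hv h0 =>
    v.succ_ne_zero (hσ.injOn (Nat.succ_lt_succ hv) T.numV.succ_pos (h0.trans hσ0.symm))
  have hσ1 : σ 1 = 1 := by
    have hparent1 : T'.expand.parent (σ 1) = 0 :=
      (hparent 1 (Nat.succ_lt_succ hT)).symm.trans hσ0
    have hle : σ 1 ≤ 1 := parent_expand_eq_zero_iff.1 hparent1
    have hne : σ 1 ≠ 0 := hσ_ne 0 hT
    lia
  let ρ : ℕ → ℕ := fun v => σ (v + 1) - 1
  have hσρ : ∀ v < T.numV, σ (v + 1) = ρ v + 1 := fun v hv =>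
    (Nat.succ_pred_eq_of_ne_zero (hσ_ne v hv)).symm
  have hρ0 : ρ 0 = 0 := by simp [ρ, hσ1]
  have hρ : Set.BijOn ρ (Set.Iio T.numV) (Set.Iio T'.numV) := (bijOn_Iio_succ_iff hσ0 hσρ).1 hσ
  refine ⟨ρ, hρ, hρ0, fun v hv => ?_, fun v hv => ?_, fun i => ?_⟩
  · rcases eq_or_ne v 0 with rfl | hv0
    · rw [hroot, hρ0, hroot']
    · have hρv : ρ v ≠ 0 := fun h0 => hv0 (hρ.injOn hv hT (h0.trans hρ0.symm))
      have hσparent := hparent (v + 1) (Nat.succ_lt_succ hv)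
      rw [hσρ v hv, parent_expand_succ hv0, parent_expand_succ hρv] at hσparent
      exact Nat.sub_eq_of_eq_add hσparent
  · have hσgenus := hgenus (v + 1) (Nat.succ_lt_succ hv)
    rwa [hσρ v hv] at hσgenus
  · exact Nat.sub_eq_of_eq_add (hleg i)

theorem contract_expand (hroot : T.parent 0 = 0) : T.expand.contract = T := by
  have hparent : T.expand.contract.parent = T.parent := by
    funext v
    rcases v with _ | v
    · exact hroot.symm
    · rfl
  exact congrArg (fun p => (⟨T.numV, p, T.genus, T.legAt⟩ : RawTree n)) hparent

namespace RootContractible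

theorem children_zero (hc : RootContractible T) (hT : IsSRT g n m T) : T.children 0 = {1} := by
  obtain ⟨w, hw⟩ := Finset.card_eq_one.1 hc.2.1
  obtain ⟨hwT, -, hw0⟩ := mem_children.1 (hw ▸ Finset.mem_singleton_self w)
  have h1T : 1 < T.numV := (Nat.one_le_iff_ne_zero.2 hw0).trans_lt hwT
  have hparent1 : T.parent 1 = 0 := Nat.lt_one_iff.1 (hT.parent_lt_self Nat.one_pos h1T)
  have h1w : 1 ∈ T.children 0 := mem_children.2 ⟨h1T, hparent1, one_ne_zero⟩
  rw [hw, Finset.mem_singleton] at h1w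
  rw [hw, h1w]

theorem one_lt_numV (hc : RootContractible T) (hT : IsSRT g n m T) : 1 < T.numV :=
  (mem_children.1 (hc.children_zero hT ▸ Finset.mem_singleton_self 1)).1

theorem parent_one (hc : RootContractible T) (hT : IsSRT g n m T) : T.parent 1 = 0 :=
  (mem_children.1 (hc.children_zero hT ▸ Finset.mem_singleton_self 1)).2.1

theorem parent_ne_zero (hc : RootContractible T) (hT : IsSRT g n m T) {v : ℕ} (hv : 1 < v)
    (hvT : v < T.numV) : T.parent v ≠ 0 := fun h0 => by
  have hmem : v ∈ T.children 0 := mem_children.2 ⟨hvT, h0, (Nat.one_pos.trans hv).ne'⟩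
  rw [hc.children_zero hT, Finset.mem_singleton] at hmem
  exact hv.ne' hmem

theorem legAt_ne_zero (hc : RootContractible T) (i : Fin n) : T.legAt i ≠ 0 := fun h0 =>
  Finset.eq_empty_iff_forall_notMem.1 (Finset.card_eq_zero.1 hc.2.2) i (mem_legsAt.2 h0)

theorem numV_contract_pos (hc : RootContractible T) (hT : IsSRT g n m T) : 0 < T.contract.numV :=
  Nat.sub_pos_of_lt (hc.one_lt_numV hT)

theorem parent_contract_zero (hc : RootContractible T) (hT : IsSRT g n m T) :
    T.contract.parent 0 = 0 := by
  simp [contract, hc.parent_one hT]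

theorem agree_expand_contract (hc : RootContractible T) (hT : IsSRT g n m T) :
    Agree T.contract.expand T := by
  have hnumV : T.contract.expand.numV = T.numV := Nat.sub_add_cancel hT.numV_pos
  refine ⟨hnumV, ?_, ?_, fun i => Nat.succ_pred_eq_of_ne_zero (hc.legAt_ne_zero i)⟩
  · rw [hnumV]
    rintro (_ | _ | v) hv
    · exact hT.parent_zero.symm
    · exact (hc.parent_one hT).symm
    · exact Nat.succ_pred_eq_of_ne_zero (hc.parent_ne_zero hT v.one_lt_succ_succ hv)
  · rintro (_ | v) -
    · exact hc.1.symm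
    · rfl

theorem isSRT_contract_and_rootStablePlus (hc : RootContractible T) (hT : IsSRT g n m T)
    (hm : 2 ≤ m) : IsSRT g n m T.contract ∧ RootStablePlus T.contract :=
  (isSRT_expand_iff (hc.numV_contract_pos hT) (hc.parent_contract_zero hT) hm).1
    ((hc.agree_expand_contract hT).symm.isSRT hT)

theorem iso_contract_iff (hc : RootContractible T) (hT : IsSRT g n m T)
    (hc' : RootContractible T') (hT' : IsSRT g n m T') :
    Iso T.contract T'.contract ↔ Iso T T' := by
  have hagree := hc.agree_expand_contract hT
  have hagree' := hc'.agree_expand_contract hT'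
  constructor
  · intro h
    exact hagree.symm.iso.trans (h.expand.trans hagree'.iso)
  · intro h
    exact Iso.of_expand (hc.numV_contract_pos hT) (hc.parent_contract_zero hT)
      (hc'.parent_contract_zero hT') (hagree.iso.trans (h.trans hagree'.symm.iso))

end RootContractible

theorem RootStablePlus.exists_contract_eq (hs : RootStablePlus T) (hT : IsSRT g n m T)
    (hm : 2 ≤ m) : ∃ T' : RawTree n, IsSRT g n m T' ∧ RootContractible T' ∧ T'.contract = T :=
  ⟨T.expand, (isSRT_expand_iff hT.numV_pos hT.parent_zero hm).2 ⟨hT, hs⟩,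
    rootContractible_expand hT.numV_pos, contract_expand hT.parent_zero⟩

end RawTree

theorem equivalence_srtRel (g n m : ℕ) : Equivalence (SRTRel g n m) where
  refl S := RawTree.Iso.refl S.1
  symm {S _} h := h.symm S.2
  trans h h' := h.trans h'

theorem contraction_bijection_general (g n m : ℕ) (hm : 2 ≤ m) :
    ∃ F : {t : SRT g n m //
            ∃ S : SRTRep g n m, Quot.mk (SRTRel g n m) S = t ∧ RawTree.RootContractible S.1}
          → {t : SRT g n m //
            ∃ S : SRTRep g n m, Quot.mk (SRTRel g n m) S = t ∧ RawTree.RootStablePlus S.1},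
      Function.Bijective F ∧
      ∀ (T : RawTree n) (hT : RawTree.IsSRT g n m T) (hc : RawTree.RootContractible T),
        ∃ hT' : RawTree.IsSRT g n m T.contract,
          (F ⟨Quot.mk (SRTRel g n m) ⟨T, hT⟩, ⟨⟨T, hT⟩, rfl, hc⟩⟩).val
            = Quot.mk (SRTRel g n m) ⟨T.contract, hT'⟩ := by
  let f (S : {S : SRTRep g n m // RawTree.RootContractible S.1}) :
      {S : SRTRep g n m // RawTree.RootStablePlus S.1} :=
    ⟨⟨S.1.1.contract, (S.2.isSRT_contract_and_rootStablePlus S.1.2 hm).1⟩,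
      (S.2.isSRT_contract_and_rootStablePlus S.1.2 hm).2⟩
  have hf S S' : SRTRel g n m (f S) (f S') ↔ SRTRel g n m S S' :=
    S.2.iso_contract_iff S.1.2 S'.2 S'.1.2
  have hsurj (S' : {S : SRTRep g n m // RawTree.RootStablePlus S.1}) :
      ∃ S, SRTRel g n m (f S) S' := by
    obtain ⟨T, hT, hc, hcontract⟩ := S'.2.exists_contract_eq S'.1.2 hm
    have hiso : RawTree.Iso T.contract S'.1.1 := hcontract ▸ RawTree.Iso.refl T.contract
    exact ⟨⟨⟨T, hT⟩, hc⟩, hiso⟩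
  have hequiv := equivalence_srtRel g n m
  obtain ⟨F, hF, hFval⟩ := exists_bijective_quot_subtype hequiv hequiv f hf hsurj
  exact ⟨F, hF, fun T hT hc => ⟨_, hFval ⟨⟨T, hT⟩, hc⟩⟩⟩

/-- The contraction map is a well-defined bijection from the set of stable rooted
trees in `SRT_{g,n,2}` whose root has genus `0` and exactly one positive half-edge,
this half-edge being an edge, onto the set of stable rooted trees in `SRT_{g,n,2}`
whose root satisfies `2 g(v_r) − 2 + |H_+(v_r)| ≥ 0`. -/
theorem contraction_bijection (g n : ℕ) (h : 0 < 2 * g + n) :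
    ∃ F : {t : SRT g n 2 //
            ∃ S : SRTRep g n 2, Quot.mk (SRTRel g n 2) S = t ∧ RawTree.RootContractible S.1}
          → {t : SRT g n 2 //
            ∃ S : SRTRep g n 2, Quot.mk (SRTRel g n 2) S = t ∧ RawTree.RootStablePlus S.1},
      Function.Bijective F ∧
      ∀ (T : RawTree n) (hT : RawTree.IsSRT g n 2 T) (hc : RawTree.RootContractible T),
        ∃ hT' : RawTree.IsSRT g n 2 T.contract,
          (F ⟨Quot.mk (SRTRel g n 2) ⟨T, hT⟩, ⟨⟨T, hT⟩, rfl, hc⟩⟩).val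
            = Quot.mk (SRTRel g n 2) ⟨T.contract, hT'⟩ :=
  contraction_bijection_general g n 2 le_rfl
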